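/- Fix d ≥ 3, positive reals r, s, and a real b with 0 < b ≤ d − 2. For every λ ∈ (0,∞)^d, the Kullback–Leibler risk of the empirical Bayes predictive distribution is strictly smaller than that of the Jeffreys predictive distribution: R(λ, p̂) < R(λ, p_J), where R(λ, q) = Σ_{x∈ℕ^d} p_r(x|λ) Σ_{y∈ℕ^d} p_s(y|λ) log(p_s(y|λ)/q(y;x)). -/

import Mathlib

/-- Joint pmf of `d` independent Poisson variables with means `c * lam i`. -/
noncomputable def poissonPMF (d : ℕ) (c : ℝ) (lam : Fin d → ℝ) (x : Fin d → ℕ) : ℝ :=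
  ∏ i, Real.exp (-(c * lam i)) * (c * lam i) ^ (x i) / (Nat.factorial (x i) : ℝ)

/-- Bayesian predictive distribution based on the Jeffreys prior. -/
noncomputable def pJ (d : ℕ) (r s : ℝ) (x y : Fin d → ℕ) : ℝ :=
  (r / (r + s)) ^ ((∑ i, (x i : ℝ)) + (d : ℝ) / 2) * (s / (r + s)) ^ (∑ i, y i)
    * ∏ i, Real.Gamma ((x i : ℝ) + (y i : ℝ) + 1 / 2)
        / (Real.Gamma ((x i : ℝ) + 1 / 2) * (Nat.factorial (y i) : ℝ))

/-- Kullback–Leibler risk of a predictive distribution `q` (with `q x y = q(y; x)`). -/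
noncomputable def klRisk (d : ℕ) (r s : ℝ) (lam : Fin d → ℝ)
    (q : (Fin d → ℕ) → (Fin d → ℕ) → ℝ) : ℝ :=
  ∑' x : Fin d → ℕ, poissonPMF d r lam x *
    ∑' y : Fin d → ℕ, poissonPMF d s lam y * Real.log (poissonPMF d s lam y / q x y)

/-- Empirical Bayes predictive distribution with parameter `b`,
where `α(x) = r * b / (∑ i, x i + 1)`. -/
noncomputable def pHat (d : ℕ) (r s b : ℝ) (x y : Fin d → ℕ) : ℝ :=
  ((r + r * b / ((∑ i, (x i : ℝ)) + 1)) / (r + s + r * b / ((∑ i, (x i : ℝ)) + 1)))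
      ^ ((∑ i, (x i : ℝ)) + (d : ℝ) / 2)
    * (s / (r + s + r * b / ((∑ i, (x i : ℝ)) + 1))) ^ (∑ i, y i)
    * ∏ i, Real.Gamma ((x i : ℝ) + (y i : ℝ) + 1 / 2)
        / (Real.Gamma ((x i : ℝ) + 1 / 2) * (Nat.factorial (y i) : ℝ))


theorem prod_hasSum (d : ℕ) (f : Fin d → ℕ → ℝ) (a : Fin d → ℝ) (h0 : ∀ i n, 0 ≤ f i n)
    (h : ∀ i, HasSum (f i) (a i)) :
    HasSum (fun x : Fin d → ℕ => ∏ i, f i (x i)) (∏ i, a i) := by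
  induction d with
  | zero => simp
  | succ d ih =>
    have h1 := ih (fun i => f i.succ) (fun i => a i.succ) (fun i n => h0 _ _) (fun i => h _)
    have h3 : Summable (fun p : ℕ × (Fin d → ℕ) => f 0 p.1 * ∏ i, f (Fin.succ i) (p.2 i)) :=
      Summable.mul_of_nonneg (f := f 0) (g := fun x : Fin d → ℕ => ∏ i, f (Fin.succ i) (x i))
        (h 0).summable h1.summable (fun n => h0 _ _)
        (fun x => Finset.prod_nonneg fun i _ => h0 _ _)
    have h2 := (h 0).mul h1 h3
    rw [← (Fin.consEquiv (fun _ => ℕ)).hasSum_iff]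
    rw [Fin.prod_univ_succ]
    have e : (fun x : Fin (d + 1) → ℕ => ∏ i, f i (x i)) ∘ ⇑(Fin.consEquiv fun _ => ℕ)
        = fun x => f 0 x.1 * ∏ i, f i.succ (x.2 i) := by
      funext ⟨n, x⟩
      simp [Fin.prod_univ_succ, Fin.consEquiv]
    rw [e]; exact h2

theorem pois1 (l K : ℝ) :
    HasSum (fun n : ℕ => Real.exp (-l) * l ^ n / (Nat.factorial n : ℝ) * K ^ n)
     (Real.exp (-l) * Real.exp (l * K)) := by
  have h := NormedSpace.expSeries_div_hasSum_exp (𝔸 := ℝ) (l * K)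
  rw [← Real.exp_eq_exp_ℝ] at h
  have h2 := h.mul_left (Real.exp (-l))
  have e : (fun n : ℕ => Real.exp (-l) * l ^ n / (Nat.factorial n : ℝ) * K ^ n)
      = fun n : ℕ => Real.exp (-l) * ((l * K) ^ n / (Nat.factorial n : ℝ)) := by
    funext n
    rw [mul_pow]; ring
  rw [e]; exact h2

theorem pois_hasSum (d : ℕ) (c : ℝ) (hc : 0 < c) (lam : Fin d → ℝ) (hlam : ∀ i, 0 < lam i) :
    HasSum (poissonPMF d c lam) 1 := by
  have h := prod_hasSum d (fun i n => Real.exp (-(c * lam i)) * (c * lam i) ^ n / (Nat.factorial n : ℝ) * 1 ^ n) _ (fun i n => by have := hlam i; positivity) (fun i => pois1 (c * lam i) 1)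
  convert h using 1
  · ext x; simp [poissonPMF]
  · simp [← Real.exp_add]

theorem pois_exp_summable (d : ℕ) (c : ℝ) (hc : 0 < c) (lam : Fin d → ℝ) (hlam : ∀ i, 0 < lam i) :
    Summable (fun x => poissonPMF d c lam x * Real.exp (∑ i, (x i : ℝ))) := by
  have h := prod_hasSum d (fun i n => Real.exp (-(c * lam i)) * (c * lam i) ^ n / (Nat.factorial n : ℝ) * (Real.exp 1) ^ n) _ (fun i n => by have := hlam i; positivity) (fun i => pois1 (c * lam i) (Real.exp 1))
  convert h.summable using 1
  ext x
  rw [poissonPMF, Real.exp_sum, ← Finset.prod_mul_distrib]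
  refine Finset.prod_congr rfl fun i _ => ?_
  rw [← Real.exp_nat_mul, mul_one]

theorem pois_pos (d : ℕ) (c : ℝ) (hc : 0 < c) (lam : Fin d → ℝ) (hlam : ∀ i, 0 < lam i)
    (x : Fin d → ℕ) : 0 < poissonPMF d c lam x :=
  Finset.prod_pos fun i _ => by have := hlam i; positivity

theorem stein (d : ℕ) (c : ℝ) (lam : Fin d → ℝ) (i : Fin d) (g : (Fin d → ℕ) → ℝ) (v : ℝ)
    (h : HasSum (fun x => c * lam i * (poissonPMF d c lam x * g (x + Pi.single i 1))) v) :
    HasSum (fun x => poissonPMF d c lam x * ((x i : ℝ) * g x)) v := by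
  have hinj : Function.Injective (fun x : Fin d → ℕ => x + Pi.single i 1) := add_left_injective _
  rw [← hinj.hasSum_iff]
  · convert h using 1
    ext x
    simp only [Function.comp, Pi.add_apply, Pi.single_eq_same, poissonPMF]
    rw [← Finset.mul_prod_erase _ _ (Finset.mem_univ i), ← Finset.mul_prod_erase Finset.univ (fun j => Real.exp (-(c * lam j)) * (c * lam j) ^ (x j) / (Nat.factorial (x j) : ℝ)) (Finset.mem_univ i)]
    rw [Finset.prod_congr rfl (g := fun j => Real.exp (-(c * lam j)) * (c * lam j) ^ (x j) / (Nat.factorial (x j) : ℝ))]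
    · simp only [Pi.add_apply, Pi.single_eq_same, Nat.factorial_succ]
      have : ((x i).factorial : ℝ) ≠ 0 := by positivity
      push_cast
      field_simp
      ring
    · intro j hj
      simp [Pi.single_eq_of_ne (Finset.ne_of_mem_erase hj)]
  · intro x hx
    rcases Nat.eq_zero_or_pos (x i) with h0 | h0
    · simp [h0]
    · exfalso; apply hx
      refine ⟨x - Pi.single i 1, ?_⟩
      ext j
      by_cases hj : j = i
      · subst hj; simp; omega
      · simp [hj]

theorem log_gamma_bound (x y : ℕ) :
    |Real.log (Real.Gamma ((x : ℝ) + y + 1 / 2)) - Real.log (Real.Gamma ((x : ℝ) + 1 / 2))|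
      ≤ y * (x + y) := by
  induction y with
  | zero => simp
  | succ y ih =>
    have hz : (0:ℝ) < x + y + 1 / 2 := by positivity
    have e : ((x : ℝ) + (y + 1 : ℕ) + 1 / 2) = (x + y + 1 / 2) + 1 := by push_cast; ring
    rw [e, Real.Gamma_add_one hz.ne', Real.log_mul hz.ne' (Real.Gamma_pos_of_pos hz).ne']
    have h1 := Real.log_le_sub_one_of_pos hz
    have h2 := Real.one_sub_inv_le_log_of_pos hz
    have h3 : ((x:ℝ) + y + 1 / 2)⁻¹ ≤ 2 := by
      rw [inv_le_comm₀ hz (by norm_num)]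
      have : (0:ℝ) ≤ x + y := by positivity
      linarith
    have hx : (0:ℝ) ≤ x := by positivity
    have hy : (0:ℝ) ≤ y := by positivity
    rw [abs_le] at ih ⊢
    push_cast
    constructor <;> nlinarith


theorem log_up (v : ℝ) (hv : 0 ≤ v) : Real.log (1 + v) ≤ v * (2 + v) / (2 * (1 + v)) := by
  have h := Real.self_le_sinh_iff.2 (Real.log_nonneg (show (1:ℝ) ≤ 1 + v by linarith))
  rw [Real.sinh_log (by linarith)] at h
  refine h.trans (le_of_eq ?_)
  have : 1 + v ≠ 0 := by positivity
  field_simp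
  ring

theorem key (n t b D : ℝ) (hn : 0 ≤ n) (ht0 : 0 < t) (ht1 : t < 1) (hb : 0 < b)
    (hD : n + 1 + b / 2 ≤ D) :
    0 < D * (Real.log (1 + b / (n + 1)) - Real.log (1 + t * (b / (n + 1))))
      - (1 - t) / t * (n * Real.log (1 + t * (b / n))) := by
  have ht : 0 < 1 - t := by linarith
  have hm : 0 < n + 1 := by linarith
  -- upper bound
  have h1 : (1 - t) / t * (n * Real.log (1 + t * (b / n)))
      < (1 - t) * (b / 2) * (1 + (n + 1) / (n + 1 + t * b)) := by
    rcases hn.eq_or_lt with h0 | h0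
    · rw [← h0]; simp only [zero_mul, mul_zero]; positivity
    · have := log_up (t * (b / n)) (by positivity)
      calc (1 - t) / t * (n * Real.log (1 + t * (b / n)))
          ≤ (1 - t) / t * (n * (t * (b / n) * (2 + t * (b / n)) / (2 * (1 + t * (b / n))))) := by
            gcongr
        _ = (1 - t) * (b / 2) * (1 + n / (n + t * b)) := by
            field_simp
            ring
        _ < _ := by
            have : n / (n + t * b) < (n + 1) / (n + 1 + t * b) := by
              rw [div_lt_div_iff₀ (by positivity) (by positivity)]
              nlinarith [mul_pos ht0 hb]
            have hc : 0 < (1 - t) * (b / 2) := by positivity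
            nlinarith
  have h2 : (1 - t) * b * (2 * (n + 1) + b) / (2 * (n + 1) + (1 + t) * b)
      ≤ (n + 1 + b / 2) * (Real.log (1 + b / (n + 1)) - Real.log (1 + t * (b / (n + 1)))) := by
    have hw : 0 ≤ (1 - t) * b / (n + 1 + t * b) := by positivity
    have := Real.le_log_one_add_of_nonneg hw
    rw [← Real.log_div (by positivity) (by positivity)]
    have e : (1 + b / (n + 1)) / (1 + t * (b / (n + 1))) = 1 + (1 - t) * b / (n + 1 + t * b) := by
      field_simp
      ring
    rw [e]
    refine le_trans (le_of_eq ?_) (mul_le_mul_of_nonneg_left this (by positivity))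
    have h3 : (1 - t) * b / (n + 1 + t * b) + 2 = (2 * (n + 1) + (1 + t) * b) / (n + 1 + t * b) := by
      field_simp
      ring
    rw [h3]
    field_simp
  have h3 : (1 - t) * (b / 2) * (1 + (n + 1) / (n + 1 + t * b))
      ≤ (1 - t) * b * (2 * (n + 1) + b) / (2 * (n + 1) + (1 + t) * b) := by
    have : (1 + (n + 1) / (n + 1 + t * b)) / 2 ≤ (2 * (n + 1) + b) / (2 * (n + 1) + (1 + t) * b) := by
      have e : (1 + (n + 1) / (n + 1 + t * b)) / 2
        = (2 * (n + 1) + t * b) / (2 * (n + 1 + t * b)) := by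
        field_simp
        ring
      rw [e, div_le_div_iff₀ (by positivity) (by positivity)]
      nlinarith [mul_pos (mul_pos ht0 ht) (mul_pos hb hb)]
    have hc : 0 ≤ (1 - t) * b := by positivity
    have := mul_le_mul_of_nonneg_left this hc
    rw [mul_div_assoc]
    linarith
  have h4 : 0 ≤ Real.log (1 + b / (n + 1)) - Real.log (1 + t * (b / (n + 1))) := by
    have : 0 < b / (n + 1) := by positivity
    refine sub_nonneg.2 (Real.log_le_log (by positivity) (by nlinarith))
  have h5 := mul_le_mul_of_nonneg_right hD h4
  linarith


theorem log_pois (d : ℕ) (s : ℝ) (hs : 0 < s) (lam : Fin d → ℝ) (hlam : ∀ i, 0 < lam i)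
    (y : Fin d → ℕ) : Real.log (poissonPMF d s lam y)
      = ∑ i, (-(s * lam i) + y i * Real.log (s * lam i) - Real.log (Nat.factorial (y i))) := by
  unfold poissonPMF
  rw [Real.log_prod (fun i _ => by have := hlam i; positivity)]
  refine Finset.sum_congr rfl fun i _ => ?_
  have := hlam i
  rw [Real.log_div (by positivity) (by positivity), Real.log_mul (by positivity) (by positivity),
    Real.log_exp, Real.log_pow]

theorem log_gprod (d : ℕ) (x y : Fin d → ℕ) :
    Real.log (∏ i, Real.Gamma ((x i : ℝ) + (y i : ℝ) + 1 / 2)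
        / (Real.Gamma ((x i : ℝ) + 1 / 2) * (Nat.factorial (y i) : ℝ)))
    = ∑ i, (Real.log (Real.Gamma ((x i : ℝ) + y i + 1 / 2))
        - Real.log (Real.Gamma ((x i : ℝ) + 1 / 2)) - Real.log (Nat.factorial (y i))) := by
  have hg : ∀ z : ℝ, 0 ≤ z → 0 < Real.Gamma (z + 1 / 2) := fun z hz =>
    Real.Gamma_pos_of_pos (by linarith)
  rw [Real.log_prod]
  · refine Finset.sum_congr rfl fun i _ => ?_
    have h1 := hg (x i) (by positivity)
    have h2 := hg (x i + y i) (by positivity)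
    rw [Real.log_div h2.ne' (by positivity), Real.log_mul h1.ne' (by positivity)]
    ring
  · intro i _
    have h1 := hg (x i) (by positivity)
    have h2 := hg (x i + y i) (by positivity)
    positivity

theorem gprod_pos (d : ℕ) (x y : Fin d → ℕ) :
    0 < (∏ i, Real.Gamma ((x i : ℝ) + (y i : ℝ) + 1 / 2)
        / (Real.Gamma ((x i : ℝ) + 1 / 2) * (Nat.factorial (y i) : ℝ))) := by
  have hg : ∀ z : ℝ, 0 ≤ z → 0 < Real.Gamma (z + 1 / 2) := fun z hz =>
    Real.Gamma_pos_of_pos (by linarith)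
  refine Finset.prod_pos fun i _ => ?_
  have h1 := hg (x i) (by positivity)
  have h2 := hg (x i + y i) (by positivity)
  positivity

theorem pJ_pos (d : ℕ) (r s : ℝ) (hr : 0 < r) (hs : 0 < s) (x y : Fin d → ℕ) :
    0 < pJ d r s x y := by
  have := gprod_pos d x y
  unfold pJ
  positivity

theorem log_pJ (d : ℕ) (r s : ℝ) (hr : 0 < r) (hs : 0 < s) (x y : Fin d → ℕ) :
    Real.log (pJ d r s x y) = ((∑ i, (x i : ℝ)) + (d : ℝ) / 2) * Real.log (r / (r + s))
      + (∑ i, (y i : ℝ)) * Real.log (s / (r + s))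
      + Real.log (∏ i, Real.Gamma ((x i : ℝ) + (y i : ℝ) + 1 / 2)
        / (Real.Gamma ((x i : ℝ) + 1 / 2) * (Nat.factorial (y i) : ℝ))) := by
  have := gprod_pos d x y
  unfold pJ
  rw [Real.log_mul (by positivity) this.ne', Real.log_mul (by positivity) (by positivity),
    Real.log_rpow (by positivity), Real.log_pow]
  push_cast
  rfl

theorem log_pHat (d : ℕ) (r s b : ℝ) (hr : 0 < r) (hs : 0 < s) (hb : 0 < b)
    (x y : Fin d → ℕ) :
    0 < pHat d r s b x y ∧
    Real.log (pHat d r s b x y) = Real.log (pJ d r s x y)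
      + (((∑ i, (x i : ℝ)) + (d : ℝ) / 2) *
          (Real.log (1 + b / ((∑ i, (x i : ℝ)) + 1))
            - Real.log (1 + r / (r + s) * (b / ((∑ i, (x i : ℝ)) + 1))))
        - (∑ i, (y i : ℝ)) * Real.log (1 + r / (r + s) * (b / ((∑ i, (x i : ℝ)) + 1)))) := by
  have := gprod_pos d x y
  rw [log_pJ d r s hr hs]
  have hN : (0:ℝ) ≤ ∑ i, (x i : ℝ) := by positivity
  unfold pHat
  generalize (∑ i, (x i : ℝ)) = N at *
  have e1 : (r + r * b / (N + 1)) / (r + s + r * b / (N + 1))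
    = r / (r + s) * (1 + b / (N + 1)) / (1 + r / (r + s) * (b / (N + 1))) := by
    field_simp
  have e2 : s / (r + s + r * b / (N + 1))
    = s / (r + s) / (1 + r / (r + s) * (b / (N + 1))) := by
    field_simp
  rw [e1, e2]
  refine ⟨by positivity, ?_⟩
  rw [Real.log_mul (by positivity) this.ne', Real.log_mul (by positivity) (by positivity),
    Real.log_rpow (by positivity), Real.log_pow, Real.log_div (by positivity) (by positivity),
    Real.log_mul (by positivity) (by positivity), Real.log_div (x := s / (r + s)) (by positivity) (by positivity)]
  push_cast
  ring

theorem log_ratio_bound (d : ℕ) (r s : ℝ) (hr : 0 < r) (hs : 0 < s) (lam : Fin d → ℝ)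
    (hlam : ∀ i, 0 < lam i) : ∃ C : ℝ, 0 ≤ C ∧ ∀ x y : Fin d → ℕ,
    |Real.log (poissonPMF d s lam y / pJ d r s x y)|
      ≤ C * (Real.exp (∑ i, (x i : ℝ)) * Real.exp (∑ i, (y i : ℝ))) := by
  refine ⟨2 * (∑ i, (s * lam i + |Real.log (s * lam i)| + 1) +
    ((1 + (d:ℝ) / 2) * |Real.log (r / (r + s))| + |Real.log (s / (r + s))|)), ?_, ?_⟩
  · have : ∀ i, 0 ≤ s * lam i := fun i => (mul_pos hs (hlam i)).le
    have : 0 ≤ ∑ i, (s * lam i + |Real.log (s * lam i)| + 1) :=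
      Finset.sum_nonneg fun i _ => by have := this i; positivity
    positivity
  intro x y
  rw [Real.log_div (pois_pos d s hs lam hlam y).ne' (pJ_pos d r s hr hs x y).ne',
    log_pJ d r s hr hs, log_gprod, log_pois d s hs lam hlam, ← Real.exp_add]
  have hx : ∀ i, (x i : ℝ) ≤ ∑ i, (x i : ℝ) := fun i =>
    Finset.single_le_sum (f := fun i => (x i : ℝ)) (fun _ _ => Nat.cast_nonneg _) (Finset.mem_univ i)
  have hy : ∀ i, (y i : ℝ) ≤ ∑ i, (y i : ℝ) := fun i =>
    Finset.single_le_sum (f := fun i => (y i : ℝ)) (fun _ _ => Nat.cast_nonneg _) (Finset.mem_univ i)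
  have hN0 : (0:ℝ) ≤ ∑ i, (x i : ℝ) := by positivity
  have hM0 : (0:ℝ) ≤ ∑ i, (y i : ℝ) := by positivity
  set N := ∑ i, (x i : ℝ)
  set M := ∑ i, (y i : ℝ)
  have hQ : (1 + N + M) ^ 2 ≤ 2 * Real.exp (N + M) := by
    have := Real.quadratic_le_exp_of_nonneg (add_nonneg hN0 hM0)
    nlinarith
  set Q := (1 + N + M) ^ 2 with hQd
  have hQ1 : 1 ≤ Q := by nlinarith [mul_nonneg hN0 hM0]
  have hQN : N ≤ Q := by nlinarith [mul_nonneg hN0 hM0]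
  have hQM : M ≤ Q := by nlinarith [mul_nonneg hN0 hM0]
  have e : (∑ i, (-(s * lam i) + y i * Real.log (s * lam i) - Real.log (Nat.factorial (y i)))) -
      ((N + d / 2) * Real.log (r / (r + s)) + M * Real.log (s / (r + s)) +
        ∑ i, (Real.log (Real.Gamma ((x i : ℝ) + y i + 1 / 2))
        - Real.log (Real.Gamma ((x i : ℝ) + 1 / 2)) - Real.log (Nat.factorial (y i))))
      = ∑ i, (-(s * lam i) + y i * Real.log (s * lam i) -
          (Real.log (Real.Gamma ((x i : ℝ) + y i + 1 / 2))
        - Real.log (Real.Gamma ((x i : ℝ) + 1 / 2))))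
        - ((N + d / 2) * Real.log (r / (r + s)) + M * Real.log (s / (r + s))) := by
    rw [sub_add_eq_sub_sub, sub_right_comm, ← Finset.sum_sub_distrib]
    congr 1
    exact Finset.sum_congr rfl fun i _ => by ring
  rw [e]
  have t1 : |∑ i, (-(s * lam i) + y i * Real.log (s * lam i) -
          (Real.log (Real.Gamma ((x i : ℝ) + y i + 1 / 2))
        - Real.log (Real.Gamma ((x i : ℝ) + 1 / 2))))| ≤
      (∑ i, (s * lam i + |Real.log (s * lam i)| + 1)) * Q := by
    rw [Finset.sum_mul]
    refine (Finset.abs_sum_le_sum_abs _ _).trans (Finset.sum_le_sum fun i _ => ?_)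
    have h1 := log_gamma_bound (x i) (y i)
    have hp : 0 < s * lam i := mul_pos hs (hlam i)
    have hxi := hx i
    have hyi := hy i
    have hxn : (0:ℝ) ≤ x i := by positivity
    have hyn : (0:ℝ) ≤ y i := by positivity
    have a1 : |-(s * lam i)| ≤ s * lam i * Q := by
      rw [abs_neg, abs_of_pos hp]; nlinarith
    have a2 : |y i * Real.log (s * lam i)| ≤ |Real.log (s * lam i)| * Q := by
      rw [abs_mul, abs_of_nonneg hyn, mul_comm]
      exact mul_le_mul_of_nonneg_left (hyi.trans hQM) (abs_nonneg _)
    have a3 : (y i : ℝ) * (x i + y i) ≤ Q := by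
      calc (y i : ℝ) * (x i + y i) ≤ M * (N + M) := by gcongr
        _ ≤ Q := by nlinarith [mul_nonneg hN0 hM0]
    have := abs_sub (-(s * lam i) + y i * Real.log (s * lam i)) (Real.log (Real.Gamma ((x i : ℝ) + y i + 1 / 2))
        - Real.log (Real.Gamma ((x i : ℝ) + 1 / 2)))
    have := abs_add_le (-(s * lam i)) (y i * Real.log (s * lam i))
    linarith
  have t2 : |(N + d / 2) * Real.log (r / (r + s))| ≤ (1 + (d:ℝ) / 2) * |Real.log (r / (r + s))| * Q := by
    rw [abs_mul, abs_of_nonneg (by positivity)]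
    have : N + d / 2 ≤ (1 + (d:ℝ) / 2) * Q := by
      have : (0:ℝ) ≤ d := by positivity
      nlinarith
    nlinarith [abs_nonneg (Real.log (r / (r + s)))]
  have t3 : |M * Real.log (s / (r + s))| ≤ |Real.log (s / (r + s))| * Q := by
    rw [abs_mul, abs_of_nonneg hM0]
    nlinarith [abs_nonneg (Real.log (s / (r + s)))]
  have t4 := abs_sub (∑ i, (-(s * lam i) + y i * Real.log (s * lam i) -
          (Real.log (Real.Gamma ((x i : ℝ) + y i + 1 / 2))
        - Real.log (Real.Gamma ((x i : ℝ) + 1 / 2)))))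
        ((N + d / 2) * Real.log (r / (r + s)) + M * Real.log (s / (r + s)))
  have t5 := abs_add_le ((N + d / 2) * Real.log (r / (r + s))) (M * Real.log (s / (r + s)))
  have hK : 0 ≤ ∑ i, (s * lam i + |Real.log (s * lam i)| + 1) +
    ((1 + (d:ℝ) / 2) * |Real.log (r / (r + s))| + |Real.log (s / (r + s))|) := by
    have : 0 ≤ ∑ i, (s * lam i + |Real.log (s * lam i)| + 1) :=
      Finset.sum_nonneg fun i _ => by have := (mul_pos hs (hlam i)).le; positivity
    positivity
  have := mul_le_mul_of_nonneg_left hQ hK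
  linarith

theorem stmt_4 (d : ℕ) (hd : 3 ≤ d) (r s b : ℝ) (hr : 0 < r) (hs : 0 < s)
    (hb0 : 0 < b) (hb : b ≤ (d : ℝ) - 2)
    (lam : Fin d → ℝ) (hlam : ∀ i, 0 < lam i) :
    klRisk d r s lam (fun x y => pHat d r s b x y)
      < klRisk d r s lam (fun x y => pJ d r s x y) := by
  obtain ⟨C, hC, hbd⟩ := log_ratio_bound d r s hr hs lam hlam
  have hSr := pois_exp_summable d r hr lam hlam
  have hSs := pois_exp_summable d s hs lam hlam
  have hPs := pois_hasSum d s hs lam hlam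
  have hPr := pois_hasSum d r hr lam hlam
  have hposr := pois_pos d r hr lam hlam
  have hposs := pois_pos d s hs lam hlam
  set t : ℝ := r / (r + s) with ht
  have ht0 : 0 < t := by positivity
  have ht1 : t < 1 := by rw [ht, div_lt_one (by positivity)]; linarith
  set Bf : (Fin d → ℕ) → ℝ := fun x => Real.log (1 + t * (b / ((∑ i, (x i : ℝ)) + 1))) with hBf
  set A : (Fin d → ℕ) → ℝ := fun x => ((∑ i, (x i : ℝ)) + (d : ℝ) / 2) *
    (Real.log (1 + b / ((∑ i, (x i : ℝ)) + 1)) - Bf x) with hA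
  -- mean of the total under `p_s`
  have hMean : HasSum (fun y => poissonPMF d s lam y * ∑ i, (y i : ℝ)) (∑ i, s * lam i) := by
    have h1 : ∀ i, HasSum (fun y => poissonPMF d s lam y * ((y i : ℝ) * 1)) (s * lam i) := by
      intro i
      apply stein d s lam i (fun _ => 1)
      have := hPs.mul_left (s * lam i)
      simpa using this
    have h2 := hasSum_sum (s := Finset.univ) (fun i _ => h1 i)
    simpa [Finset.mul_sum] using h2
  -- inner sums
  have hJs : ∀ x, Summable (fun y => poissonPMF d s lam y *
      Real.log (poissonPMF d s lam y / pJ d r s x y)) := by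
    intro x
    refine Summable.of_norm_bounded (hSs.mul_left (C * Real.exp (∑ i, (x i : ℝ)))) fun y => ?_
    rw [Real.norm_eq_abs, abs_mul, abs_of_pos (hposs y)]
    have := mul_le_mul_of_nonneg_left (hbd x y) (hposs y).le
    linarith
  have hIn : ∀ x, ∑' y, poissonPMF d s lam y * Real.log (poissonPMF d s lam y / pHat d r s b x y)
      = (∑' y, poissonPMF d s lam y * Real.log (poissonPMF d s lam y / pJ d r s x y))
        - (A x - (∑ i, s * lam i) * Bf x) := by
    intro x
    have h1 := ((hJs x).hasSum.sub ((hPs.mul_right (A x)).sub (hMean.mul_right (Bf x)))).tsum_eq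
    rw [one_mul] at h1
    rw [← h1]
    refine tsum_congr fun y => ?_
    obtain ⟨hp, hl⟩ := log_pHat d r s b hr hs hb0 x y
    rw [Real.log_div (hposs y).ne' hp.ne', Real.log_div (hposs y).ne' (pJ_pos d r s hr hs x y).ne', hl]
    simp only [hA, hBf, ht]
    ring
  set I : (Fin d → ℕ) → ℝ := fun x =>
    ∑' y, poissonPMF d s lam y * Real.log (poissonPMF d s lam y / pJ d r s x y) with hI
  set S : ℝ := ∑' y, poissonPMF d s lam y * Real.exp (∑ i, (y i : ℝ)) with hS
  have hIs : Summable (fun x => poissonPMF d r lam x * I x) := by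
    refine Summable.of_norm_bounded (hSr.mul_left (C * S)) fun x => ?_
    rw [Real.norm_eq_abs, abs_mul, abs_of_pos (hposr x)]
    have h1 : ‖I x‖ ≤ C * Real.exp (∑ i, (x i : ℝ)) * S := by
      refine tsum_of_norm_bounded (hSs.hasSum.mul_left (C * Real.exp (∑ i, (x i : ℝ)))) fun y => ?_
      rw [Real.norm_eq_abs, abs_mul, abs_of_pos (hposs y)]
      have := mul_le_mul_of_nonneg_left (hbd x y) (hposs y).le
      linarith
    rw [Real.norm_eq_abs] at h1
    have := mul_le_mul_of_nonneg_left h1 (hposr x).le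
    linarith
  have hN0 : ∀ x : Fin d → ℕ, (0:ℝ) ≤ ∑ i, (x i : ℝ) := fun x => by positivity
  have hB0 : ∀ x, 0 ≤ Bf x := fun x => Real.log_nonneg (by
    have := hN0 x
    have : 0 ≤ t * (b / ((∑ i, (x i : ℝ)) + 1)) := by positivity
    linarith)
  have hu : ∀ x : Fin d → ℕ, b / ((∑ i, (x i : ℝ)) + 1) ≤ b := fun x =>
    div_le_self hb0.le (by linarith [hN0 x])
  have hu0 : ∀ x : Fin d → ℕ, 0 < b / ((∑ i, (x i : ℝ)) + 1) := fun x => by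
    have := hN0 x
    positivity
  have hBL : ∀ x, Bf x ≤ Real.log (1 + b / ((∑ i, (x i : ℝ)) + 1)) := fun x => by
    have := hu0 x
    exact Real.log_le_log (by positivity) (by nlinarith)
  have hLb : ∀ x : Fin d → ℕ, Real.log (1 + b / ((∑ i, (x i : ℝ)) + 1)) ≤ b := fun x => by
    have := Real.log_le_sub_one_of_pos (show 0 < 1 + b / ((∑ i, (x i : ℝ)) + 1) by linarith [hu0 x])
    linarith [hu x]
  have hAs : Summable (fun x => poissonPMF d r lam x * A x) := by
    refine Summable.of_norm_bounded (hSr.mul_left ((1 + d / 2) * b)) fun x => ?_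
    have h1 : A x ≤ (1 + d / 2) * b * Real.exp (∑ i, (x i : ℝ)) := by
      have h2 : (∑ i, (x i : ℝ)) + (d : ℝ) / 2 ≤ (1 + d / 2) * Real.exp (∑ i, (x i : ℝ)) := by
        have h3 := Real.add_one_le_exp (∑ i, (x i : ℝ))
        have h4 := hN0 x
        have : (0:ℝ) ≤ d := by positivity
        nlinarith
      calc A x ≤ ((1 + d / 2) * Real.exp (∑ i, (x i : ℝ))) * b := by
            apply mul_le_mul h2 (by linarith [hLb x, hB0 x]) (by linarith [hBL x]) (by positivity)
        _ = _ := by ring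
    have h0 : 0 ≤ A x := mul_nonneg (by have := hN0 x; positivity) (by linarith [hBL x])
    rw [Real.norm_eq_abs, abs_of_nonneg (mul_nonneg (hposr x).le h0)]
    have := mul_le_mul_of_nonneg_left h1 (hposr x).le
    linarith
  have hBs : Summable (fun x => poissonPMF d r lam x * Bf x) := by
    refine Summable.of_nonneg_of_le (fun x => mul_nonneg (hposr x).le (hB0 x)) (fun x => ?_)
      (hPr.summable.mul_right b)
    exact mul_le_mul_of_nonneg_left ((hBL x).trans (hLb x)) (hposr x).le
  -- Stein identity for the second term
  set h : (Fin d → ℕ) → ℝ := fun x => Real.log (1 + t * (b / (∑ i, (x i : ℝ)))) with hh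
  have hshift : ∀ (x : Fin d → ℕ) (i : Fin d), h (x + Pi.single i 1) = Bf x := by
    intro x i
    have : ∑ j, (((x + Pi.single i 1 : Fin d → ℕ) j : ℕ) : ℝ) = (∑ j, (x j : ℝ)) + 1 := by
      simp only [Pi.add_apply, Nat.cast_add, Finset.sum_add_distrib]
      congr 1
      rw [← Nat.cast_sum, Finset.sum_pi_single']
      simp
    simp only [hh, hBf, this]
  have hStein : HasSum (fun x => poissonPMF d r lam x * ((∑ i, (x i : ℝ)) * h x))
      ((∑ i, r * lam i) * ∑' x, poissonPMF d r lam x * Bf x) := by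
    have h1 : ∀ i, HasSum (fun x => poissonPMF d r lam x * ((x i : ℝ) * h x))
        (r * lam i * ∑' x, poissonPMF d r lam x * Bf x) := by
      intro i
      apply stein
      simp only [hshift]
      exact hBs.hasSum.mul_left _
    have h2 := hasSum_sum (s := Finset.univ) (fun i _ => h1 i)
    simpa [Finset.mul_sum, Finset.sum_mul] using h2
  have hG := hAs.hasSum.sub (hStein.mul_left ((1 - t) / t))
  have hGpos : ∀ x, 0 < poissonPMF d r lam x * A x
      - (1 - t) / t * (poissonPMF d r lam x * ((∑ i, (x i : ℝ)) * h x)) := by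
    intro x
    have := key (∑ i, (x i : ℝ)) t b ((∑ i, (x i : ℝ)) + d / 2) (hN0 x) ht0 ht1 hb0 (by linarith)
    have := mul_pos (hposr x) this
    simp only [hA, hBf, hh]
    linarith
  have hpos := hG.summable.tsum_pos (fun x => (hGpos x).le) 0 (hGpos 0)
  rw [hG.tsum_eq] at hpos
  have hc : (1 - t) / t * (∑ i, r * lam i) = ∑ i, s * lam i := by
    rw [← Finset.mul_sum, ← Finset.mul_sum, ht]
    field_simp
    ring
  have hfin : klRisk d r s lam (fun x y => pHat d r s b x y)
      = klRisk d r s lam (fun x y => pJ d r s x y)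
        - ((∑' x, poissonPMF d r lam x * A x)
          - (∑ i, s * lam i) * ∑' x, poissonPMF d r lam x * Bf x) := by
    unfold klRisk
    simp only [hIn]
    rw [← (hIs.hasSum.sub (hAs.hasSum.sub (hBs.hasSum.mul_left (∑ i, s * lam i)))).tsum_eq]
    refine tsum_congr fun x => ?_
    ring
  rw [hfin, ← hc]
  linarith
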